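/- Let A be an irreducible aperiodic 0-1 matrix with Perron eigenvalue Λ, positive left and right eigenvectors u, v with Σ u_i v_i = 1. Fix 0 < δ < 1/4 and m = m(n) = ⌊n^δ⌋. Let λ_{n,m} be the distribution of the initial substring x₁...x_{n−m} of a uniformly chosen admissible cyclic word of length n, and ν_{n,m} the marginal of the Parry measure on words of length n−m. Then for n sufficiently large, λ_{n,m} is absolutely continuous with respect to ν_{n,m}, the Radon–Nikodym derivative at x₁...x_{n−m} equals ((A^{m+1})_{x_{n−m}, x₁}/P_n)·(Λ^{n−m−1}/(u_{x₁} v_{x_{n−m}})), and this quantity converges to 1 uniformly in the word as n → ∞; hence ‖λ_{n,m} − ν_{n,m}‖_{TV} → 0. -/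

import Mathlib

/-!
Write `B = A / Λ`, so that `B v = v` and `u B = u`.

*Counting.* For `0 < L ≤ n` and an admissible word `w` of length `L`, the number of admissible
cyclic words of length `n` that start with `w` is `(A ^ (n - L + 1)) w_L w_1`: appending one letter
at a time, this is downward induction on `L` from `L = n` (`cyclicExtCount_eq_pow`). It is zero if
`w` is not admissible. Dividing by `P_n` and by the Parry mass gives the density formula.

*Perron–Frobenius.* On the vectors `f` with `∑ u_i f_i = 0`, the norm `∑ u_i |f_i|` does not
increase under `B`, and a power `B ^ k` with positive entries contracts it by a factor `1 - c`,
where `B ^ k ≥ c v uᵀ` entrywise (Doeblin's argument). Applied to `f = e_y - u_y v` this gives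
`(B ^ r) x y → v_x u_y` (`tendsto_pow_entry`); taking traces, `P_n / Λ ^ n → ∑ u_i v_i = 1`. Hence
the density tends to `1`, uniformly because it depends on the word only through its two end letters.

*Total variation.* The Parry masses of the words of a fixed positive length add up to `1`
(`sum_parryCyl`), so a density within `ε` of `1` bounds the total variation by `ε / 2`.
-/

open Matrix Filter Topology

/-- `w : Fin L → Fin s` is an admissible word for the 0-1 transition matrix `A`. -/
def IsWord {s : ℕ} (A : Matrix (Fin s) (Fin s) ℝ) {L : ℕ} (w : Fin L → Fin s) : Prop :=
  ∀ i : ℕ, ∀ h : i + 1 < L, A (w ⟨i, Nat.lt_of_succ_lt h⟩) (w ⟨i + 1, h⟩) = 1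

/-- The number of admissible cyclic words of length `n` whose initial segment of length `L`
is the word `w`. -/
noncomputable def cyclicExtCount {s : ℕ} (A : Matrix (Fin s) (Fin s) ℝ) (n : ℕ) {L : ℕ}
    (w : Fin L → Fin s) : ℕ :=
  Nat.card {x : Fin n → Fin s //
    (∀ i : ℕ, ∀ h : i + 1 < n, A (x ⟨i, Nat.lt_of_succ_lt h⟩) (x ⟨i + 1, h⟩) = 1) ∧
    (∀ h : 0 < n, A (x ⟨n - 1, Nat.sub_lt h one_pos⟩) (x ⟨0, h⟩) = 1) ∧
    (∀ i : Fin L, ∀ h : (i : ℕ) < n, x ⟨(i : ℕ), h⟩ = w i)}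

open Classical in
/-- The Parry measure of the cylinder set of a word of length `L`:
`u_{w₁} v_{w_L} / Λ^{L−1}` if `w` is admissible, `0` otherwise. -/
noncomputable def parryCyl {s : ℕ} (A : Matrix (Fin s) (Fin s) ℝ) (Λ : ℝ)
    (u v : Fin s → ℝ) {L : ℕ} (w : Fin L → Fin s) : ℝ :=
  if h : 0 < L ∧ IsWord A w then
    u (w ⟨0, h.1⟩) * v (w ⟨L - 1, Nat.sub_lt h.1 one_pos⟩) / Λ ^ (L - 1)
  else 0

/-- The uniform measure on admissible cyclic words of length `n`, marginalized to the
initial substring of length `L`. -/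
noncomputable def cyclicMarginal {s : ℕ} (A : Matrix (Fin s) (Fin s) ℝ) (n : ℕ) {L : ℕ}
    (w : Fin L → Fin s) : ℝ :=
  (cyclicExtCount A n w : ℝ) / (A ^ n).trace

/-! ### Counting cyclic extensions -/

lemma isWord_snoc {s : ℕ} (A : Matrix (Fin s) (Fin s) ℝ) {L : ℕ} (h : 0 < L)
    (w : Fin L → Fin s) (a : Fin s) :
    IsWord A (Fin.snoc (α := fun _ => Fin s) w a : Fin (L + 1) → Fin s) ↔
      IsWord A w ∧ A (w ⟨L - 1, Nat.sub_lt h one_pos⟩) a = 1 := by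
  constructor
  · intro H
    refine ⟨fun i hi => ?_, ?_⟩
    · have := H i (by omega)
      simpa [Fin.snoc, hi, Nat.lt_of_succ_lt hi] using this
    · have := H (L - 1) (by omega)
      simpa [Fin.snoc, h, Nat.sub_add_cancel h] using this
  · rintro ⟨H1, H2⟩ i hi
    by_cases hL : i + 1 < L
    · simpa [Fin.snoc, hL, Nat.lt_of_succ_lt hL] using H1 i hL
    · obtain rfl : i = L - 1 := by omega
      simpa [Fin.snoc, h, Nat.sub_add_cancel h] using H2

lemma cyclicExtCount_of_not_isWord {s : ℕ} (A : Matrix (Fin s) (Fin s) ℝ) {n L : ℕ} (hLn : L ≤ n)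
    (w : Fin L → Fin s) (hw : ¬ IsWord A w) : cyclicExtCount A n w = 0 := by
  unfold cyclicExtCount
  rw [Nat.card_eq_zero]
  left
  refine ⟨fun ⟨x, h1, _, h3⟩ => hw fun i hi => ?_⟩
  rw [← h3 ⟨i, by omega⟩ (by simp; omega), ← h3 ⟨i + 1, hi⟩ (by simp; omega)]
  exact h1 i (by omega)

/-- Cyclic words extending `w` are sorted by the letter that follows `w`. -/
lemma cyclicExtCount_eq_sum_snoc {s : ℕ} (A : Matrix (Fin s) (Fin s) ℝ) {n L : ℕ} (hLn : L < n)
    (w : Fin L → Fin s) :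
    cyclicExtCount A n w =
      ∑ a, cyclicExtCount A n (Fin.snoc (α := fun _ => Fin s) w a : Fin (L + 1) → Fin s) := by
  classical
  unfold cyclicExtCount
  simp only [Nat.card_eq_fintype_card, Fintype.card_subtype, Finset.card_filter]
  rw [Finset.sum_comm]
  refine Finset.sum_congr rfl fun x _ => ?_
  have key : ∀ a, (∀ i : Fin (L + 1), ∀ h : (i : ℕ) < n, x ⟨(i : ℕ), h⟩ =
      (Fin.snoc (α := fun _ => Fin s) w a : Fin (L + 1) → Fin s) i) ↔
      ((∀ i : Fin L, ∀ h : (i : ℕ) < n, x ⟨(i : ℕ), h⟩ = w i) ∧ x ⟨L, hLn⟩ = a) := by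
    intro a
    rw [Fin.forall_fin_succ']
    simp [hLn]
  simp only [key, ← and_assoc]
  simp only [ite_and _ (x ⟨L, hLn⟩ = _)]
  by_cases hP : ((∀ i : ℕ, ∀ h : i + 1 < n, A (x ⟨i, Nat.lt_of_succ_lt h⟩) (x ⟨i + 1, h⟩) = 1) ∧
    (∀ h : 0 < n, A (x ⟨n - 1, Nat.sub_lt h one_pos⟩) (x ⟨0, h⟩) = 1)) ∧
    (∀ i : Fin L, ∀ h : (i : ℕ) < n, x ⟨(i : ℕ), h⟩ = w i)
  · simp [hP]
  · simp [hP]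

/-- The cyclic words of length `n` extending an admissible word `w` of length `L` correspond to the
paths of length `n - L + 1` from the last to the first letter of `w`. -/
lemma cyclicExtCount_eq_pow {s : ℕ} (A : Matrix (Fin s) (Fin s) ℝ)
    (h01 : ∀ i j, A i j = 0 ∨ A i j = 1) {n : ℕ} (d : ℕ) :
    ∀ {L : ℕ} (h : 0 < L) (_ : n = L + d) (w : Fin L → Fin s), IsWord A w →
      (cyclicExtCount A n w : ℝ) =
        (A ^ (d + 1)) (w ⟨L - 1, Nat.sub_lt h one_pos⟩) (w ⟨0, h⟩) := by
  induction d with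
  | zero =>
    intro L h hL w hw
    obtain rfl : n = L := hL
    rw [zero_add, pow_one]
    unfold cyclicExtCount
    rcases h01 (w ⟨n - 1, Nat.sub_lt h one_pos⟩) (w ⟨0, h⟩) with h0 | h1
    · rw [h0, Nat.cast_eq_zero, Nat.card_eq_zero]
      left
      refine ⟨fun ⟨x, _, h2, h3⟩ => ?_⟩
      obtain rfl : x = w := funext fun i => h3 i i.2
      have := h2 h
      rw [h0] at this
      exact zero_ne_one this
    · rw [h1, Nat.cast_eq_one, Nat.card_eq_one_iff_unique]
      refine ⟨⟨?_⟩, ⟨w, hw, fun _ => h1, fun i _ => rfl⟩⟩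
      rintro ⟨x, _, _, hx⟩ ⟨y, _, _, hy⟩
      exact Subtype.ext (funext fun i => (hx i i.2).trans (hy i i.2).symm)
  | succ d ih =>
    intro L h hL w hw
    rw [cyclicExtCount_eq_sum_snoc A (by omega) w, pow_succ' A (d + 1), Matrix.mul_apply]
    push_cast
    refine Finset.sum_congr rfl fun a _ => ?_
    rcases h01 (w ⟨L - 1, Nat.sub_lt h one_pos⟩) a with h0 | h1
    · rw [cyclicExtCount_of_not_isWord A (by omega), h0]
      · simp
      · rw [isWord_snoc A h, h0]
        simp
    · rw [ih (Nat.succ_pos L) (by omega) _ ((isWord_snoc A h w a).2 ⟨hw, h1⟩), h1, one_mul]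
      simp only [Fin.snoc, h]
      simp [Fin.castLT]

/-! ### The Parry masses form a probability vector -/

/-- The Parry masses of the cylinders of a fixed positive length add up to `1`: by the right
eigenvector equation, the masses of the one-letter extensions of a word add up to its own mass. -/
lemma sum_parryCyl {s : ℕ} (A : Matrix (Fin s) (Fin s) ℝ)
    (h01 : ∀ i j, A i j = 0 ∨ A i j = 1) {Λ : ℝ} (hΛ : 0 < Λ) {u v : Fin s → ℝ}
    (hright : ∀ i, ∑ j, A i j * v j = Λ * v i) (hnorm : ∑ i, u i * v i = 1) {L : ℕ} (h : 0 < L) :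
    ∑ w : Fin L → Fin s, parryCyl A Λ u v w = 1 := by
  induction L, h using Nat.le_induction with
  | base =>
    rw [← hnorm]
    refine Fintype.sum_equiv (Equiv.funUnique (Fin 1) (Fin s)) _ _ fun w => ?_
    have hw : IsWord A w := fun i hi => absurd hi (by omega)
    unfold parryCyl
    rw [dif_pos ⟨one_pos, hw⟩]
    simp
  | succ L hL ih =>
    rw [← ih, ← (Fin.snocEquiv fun _ => Fin s).sum_comp, Fintype.sum_prod_type, Finset.sum_comm]
    refine Finset.sum_congr rfl fun w _ => ?_
    have e : ∀ a, (Fin.snocEquiv fun _ : Fin (L + 1) => Fin s) (a, w) =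
      (Fin.snoc (α := fun _ => Fin s) w a : Fin (L + 1) → Fin s) := fun a => rfl
    simp only [e]
    by_cases hw : IsWord A w
    · have h1 : ∀ a, parryCyl A Λ u v (Fin.snoc (α := fun _ => Fin s) w a : Fin (L + 1) → Fin s) =
          u (w ⟨0, hL⟩) / Λ ^ L * (A (w ⟨L - 1, Nat.sub_lt hL one_pos⟩) a * v a) := by
        intro a
        unfold parryCyl
        rcases h01 (w ⟨L - 1, Nat.sub_lt hL one_pos⟩) a with h0 | h1
        · rw [dif_neg, h0]
          · simp
          · rw [isWord_snoc A hL, h0]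
            simp
        · rw [dif_pos ⟨Nat.succ_pos L, (isWord_snoc A hL w a).2 ⟨hw, h1⟩⟩]
          have h0L : 0 < L := hL
          simp only [h1, one_mul]
          simp [Fin.snoc, h0L, Fin.castLT]
          ring
      simp only [h1]
      rw [← Finset.mul_sum, hright]
      unfold parryCyl
      rw [dif_pos ⟨hL, hw⟩]
      obtain ⟨K, rfl⟩ : ∃ K, L = K + 1 := ⟨L - 1, by omega⟩
      simp only [Nat.add_sub_cancel]
      field_simp
      ring
    · unfold parryCyl
      rw [dif_neg (fun hh => hw hh.2)]
      refine Finset.sum_eq_zero fun a _ => ?_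
      rw [dif_neg]
      rw [isWord_snoc A hL]
      tauto

/-! ### Perron–Frobenius convergence -/

/-- A nonnegative matrix with positive left eigenvector `u` for the eigenvalue `1` is a contraction
for the norm `∑ u_i |f_i|`. -/
lemma sum_abs_mulVec_le {s : ℕ} (B : Matrix (Fin s) (Fin s) ℝ) (hB : ∀ i j, 0 ≤ B i j)
    {u : Fin s → ℝ} (hu : ∀ i, 0 < u i) (hleft : u ᵥ* B = u) (f : Fin s → ℝ) :
    ∑ i, u i * |(B *ᵥ f) i| ≤ ∑ i, u i * |f i| := by
  calc ∑ i, u i * |(B *ᵥ f) i| ≤ ∑ i, ∑ j, u i * B i j * |f j| := by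
        refine Finset.sum_le_sum fun i _ => ?_
        simp only [mul_assoc]
        rw [← Finset.mul_sum]
        refine mul_le_mul_of_nonneg_left ?_ (hu i).le
        change |∑ j, B i j * f j| ≤ _
        refine (Finset.abs_sum_le_sum_abs _ _).trans (le_of_eq ?_)
        exact Finset.sum_congr rfl fun j _ => by rw [abs_mul, abs_of_nonneg (hB i j)]
    _ = ∑ j, u j * |f j| := by
        rw [Finset.sum_comm]
        refine Finset.sum_congr rfl fun j _ => ?_
        rw [← Finset.sum_mul]
        congr 1
        exact congrFun hleft j

/-- Doeblin's contraction: subtracting `c v uᵀ` from `B` does not change its action on the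
vectors `f` with `u ⬝ᵥ f = 0`, and keeps the entries nonnegative. -/
lemma sum_abs_mulVec_le_mul {s : ℕ} (B : Matrix (Fin s) (Fin s) ℝ) {u v : Fin s → ℝ}
    (hu : ∀ i, 0 < u i) (hnorm : ∑ i, u i * v i = 1) {c : ℝ}
    (hB : ∀ i j, c * (v i * u j) ≤ B i j) (hleft : u ᵥ* B = u)
    (f : Fin s → ℝ) (hf : u ⬝ᵥ f = 0) :
    ∑ i, u i * |(B *ᵥ f) i| ≤ (1 - c) * ∑ i, u i * |f i| := by
  have e : ∀ i, (B *ᵥ f) i = ∑ j, (B i j - c * (v i * u j)) * f j := by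
    intro i
    have : ∑ j, c * (v i * u j) * f j = c * v i * (u ⬝ᵥ f) := by
      rw [dotProduct, Finset.mul_sum]
      exact Finset.sum_congr rfl fun j _ => by ring
    simp only [sub_mul, Finset.sum_sub_distrib, this, hf]
    simp [mulVec, dotProduct]
  calc ∑ i, u i * |(B *ᵥ f) i| ≤ ∑ i, ∑ j, u i * (B i j - c * (v i * u j)) * |f j| := by
        refine Finset.sum_le_sum fun i _ => ?_
        simp only [mul_assoc]
        rw [← Finset.mul_sum]
        refine mul_le_mul_of_nonneg_left ?_ (hu i).le
        rw [e]
        refine (Finset.abs_sum_le_sum_abs _ _).trans (le_of_eq ?_)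
        refine Finset.sum_congr rfl fun j _ => ?_
        rw [abs_mul, abs_of_nonneg (sub_nonneg.2 (hB i j))]
    _ = ∑ j, (1 - c) * (u j * |f j|) := by
        rw [Finset.sum_comm]
        refine Finset.sum_congr rfl fun j _ => ?_
        rw [← Finset.sum_mul]
        have h1 : ∑ i, u i * B i j = u j := congrFun hleft j
        have h2 : ∑ i, u i * (B i j - c * (v i * u j)) = u j - c * u j := by
          simp only [mul_sub, Finset.sum_sub_distrib, h1]
          have : ∑ i, u i * (c * (v i * u j)) = (∑ i, u i * v i) * (c * u j) := by
            rw [Finset.sum_mul]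
            exact Finset.sum_congr rfl fun i _ => by ring
          rw [this, hnorm, one_mul]
        rw [h2]
        ring
    _ = _ := by rw [Finset.mul_sum]

lemma vecMul_pow_eq {s : ℕ} (B : Matrix (Fin s) (Fin s) ℝ) {u : Fin s → ℝ}
    (hleft : u ᵥ* B = u) (r : ℕ) : u ᵥ* (B ^ r) = u := by
  induction r with
  | zero => simp
  | succ r ih => rw [pow_succ, ← vecMul_vecMul, ih, hleft]

lemma pow_mulVec_eq {s : ℕ} (B : Matrix (Fin s) (Fin s) ℝ) {v : Fin s → ℝ}
    (hright : B *ᵥ v = v) (r : ℕ) : (B ^ r) *ᵥ v = v := by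
  induction r with
  | zero => simp
  | succ r ih => rw [pow_succ, ← mulVec_mulVec, hright, ih]

/-- The norms `∑ u_i |(B ^ r f)_i|` decrease in `r` and shrink by the factor `1 - c` every `k` steps,
so their limit `l` satisfies `0 ≤ l ≤ (1 - c) l`. -/
lemma tendsto_sum_abs_pow_mulVec {s : ℕ} (B : Matrix (Fin s) (Fin s) ℝ) (hB : ∀ i j, 0 ≤ B i j)
    {k : ℕ} (hk : ∀ i j, 0 < (B ^ k) i j) {u v : Fin s → ℝ}
    (hu : ∀ i, 0 < u i) (hnorm : ∑ i, u i * v i = 1)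
    (hleft : u ᵥ* B = u) (f : Fin s → ℝ) (hf : u ⬝ᵥ f = 0) :
    Tendsto (fun r : ℕ => ∑ i, u i * |((B ^ r) *ᵥ f) i|) atTop (𝓝 0) := by
  obtain ⟨c, hc0, hc⟩ : ∃ c : ℝ, 0 < c ∧ ∀ i j, c * (v i * u j) ≤ (B ^ k) i j := by
    have h1 : ∀ p : Fin s × Fin s, ∀ᶠ c : ℝ in 𝓝[>] 0, c * (v p.1 * u p.2) ≤ (B ^ k) p.1 p.2 := by
      intro p
      have : Tendsto (fun c : ℝ => c * (v p.1 * u p.2)) (𝓝[>] 0) (𝓝 0) := by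
        have h : Continuous fun c : ℝ => c * (v p.1 * u p.2) := by fun_prop
        simpa using (h.tendsto 0).mono_left nhdsWithin_le_nhds
      exact (this.eventually (gt_mem_nhds (hk p.1 p.2))).mono fun c hc => hc.le
    obtain ⟨c, hc, hc0⟩ := ((eventually_all.2 h1).and self_mem_nhdsWithin).exists
    exact ⟨c, hc0, fun i j => hc (i, j)⟩
  set N : ℕ → ℝ := fun r => ∑ i, u i * |((B ^ r) *ᵥ f) i| with hN
  have hanti : Antitone N := by
    refine antitone_nat_of_succ_le fun r => ?_
    simp only [hN]
    rw [pow_succ', ← mulVec_mulVec]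
    exact sum_abs_mulVec_le B hB hu hleft _
  have hnn : ∀ r, 0 ≤ N r := fun r =>
    Finset.sum_nonneg fun i _ => mul_nonneg (hu i).le (abs_nonneg _)
  have hcontr : ∀ r, N (r + k) ≤ (1 - c) * N r := by
    intro r
    simp only [hN]
    rw [add_comm, pow_add, ← mulVec_mulVec]
    refine sum_abs_mulVec_le_mul (B ^ k) hu hnorm hc (vecMul_pow_eq B hleft k) _ ?_
    rw [dotProduct_mulVec, vecMul_pow_eq B hleft, hf]
  have hlim : Tendsto N atTop (𝓝 (⨅ r, N r)) :=
    tendsto_atTop_ciInf hanti ⟨0, by rintro _ ⟨r, rfl⟩; exact hnn r⟩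
  have hl0 : 0 ≤ ⨅ r, N r := le_ciInf hnn
  have hl1 : ⨅ r, N r ≤ (1 - c) * ⨅ r, N r :=
    le_of_tendsto_of_tendsto' (hlim.comp (tendsto_add_atTop_nat k)) (hlim.const_mul _) hcontr
  have : ⨅ r, N r = 0 := by nlinarith
  rwa [this] at hlim

/-- Perron–Frobenius: the powers of `B` converge to the rank-one projection `v uᵀ`. -/
lemma tendsto_pow_entry {s : ℕ} (B : Matrix (Fin s) (Fin s) ℝ) (hB : ∀ i j, 0 ≤ B i j)
    {k : ℕ} (hk : ∀ i j, 0 < (B ^ k) i j) {u v : Fin s → ℝ}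
    (hu : ∀ i, 0 < u i) (hnorm : ∑ i, u i * v i = 1)
    (hleft : u ᵥ* B = u) (hright : B *ᵥ v = v) (x y : Fin s) :
    Tendsto (fun r : ℕ => (B ^ r) x y) atTop (𝓝 (v x * u y)) := by
  have huv : u ⬝ᵥ v = 1 := hnorm
  set f : Fin s → ℝ := Pi.single y 1 - u y • v with hf
  have hf0 : u ⬝ᵥ f = 0 := by
    simp [hf, dotProduct_sub, huv]
  have key := tendsto_sum_abs_pow_mulVec B hB hk hu hnorm hleft f hf0
  have e : ∀ r, ((B ^ r) *ᵥ f) x = (B ^ r) x y - v x * u y := by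
    intro r
    simp [hf, mulVec_sub, mulVec_smul, pow_mulVec_eq B hright, mul_comm]
  have h2 : Tendsto (fun r : ℕ => u x * |(B ^ r) x y - v x * u y|) atTop (𝓝 0) := by
    refine squeeze_zero (fun r => mul_nonneg (hu x).le (abs_nonneg _)) (fun r => ?_) key
    rw [← e]
    exact Finset.single_le_sum (f := fun i => u i * |((B ^ r) *ᵥ f) i|)
      (fun i _ => mul_nonneg (hu i).le (abs_nonneg _)) (Finset.mem_univ x)
  have h3 := h2.const_mul (u x)⁻¹
  simp only [inv_mul_cancel_left₀ (hu x).ne', mul_zero] at h3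
  rw [tendsto_iff_norm_sub_tendsto_zero]
  simpa using h3

/-! ### The density of the cyclic marginal -/

/-- The density formula, for every length `n` and every initial segment of positive length. -/
lemma cyclicMarginal_eq {s : ℕ} (A : Matrix (Fin s) (Fin s) ℝ)
    (h01 : ∀ i j, A i j = 0 ∨ A i j = 1) {Λ : ℝ} (hΛ : 0 < Λ) {u v : Fin s → ℝ}
    (hu : ∀ i, 0 < u i) (hv : ∀ i, 0 < v i) {n L k : ℕ} (hn : n = L + k) (h : 0 < L)
    (w : Fin L → Fin s) (hw : IsWord A w) :
    cyclicMarginal A n w =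
      ((A ^ (k + 1)) (w ⟨L - 1, Nat.sub_lt h one_pos⟩) (w ⟨0, h⟩) / (A ^ n).trace)
        * (Λ ^ (L - 1) / (u (w ⟨0, h⟩) * v (w ⟨L - 1, Nat.sub_lt h one_pos⟩)))
        * parryCyl A Λ u v w := by
  unfold cyclicMarginal parryCyl
  rw [cyclicExtCount_eq_pow A h01 k h hn w hw, dif_pos ⟨h, hw⟩]
  have h1 := (hu (w ⟨0, h⟩)).ne'
  have h2 := (hv (w ⟨L - 1, Nat.sub_lt h one_pos⟩)).ne'
  have h3 := (pow_pos hΛ (L - 1)).ne'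
  field_simp

lemma parryCyl_pos {s : ℕ} {A : Matrix (Fin s) (Fin s) ℝ} {Λ : ℝ} (hΛ : 0 < Λ) {u v : Fin s → ℝ}
    (hu : ∀ i, 0 < u i) (hv : ∀ i, 0 < v i) {L : ℕ} (h : 0 < L)
    {w : Fin L → Fin s} (hw : IsWord A w) : 0 < parryCyl A Λ u v w := by
  unfold parryCyl
  rw [dif_pos ⟨h, hw⟩]
  exact div_pos (mul_pos (hu _) (hv _)) (pow_pos hΛ _)

/-- Comparison of the substring distribution `λ_{n,m}` of uniformly chosen cyclic words
with the Parry marginal `ν_{n,m}` for `m = ⌊n^δ⌋`, `0 < δ < 1/4`: eventual absolute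
continuity, the Radon–Nikodym derivative formula
`(A^{m+1})_{x_{n−m},x₁}/P_n · Λ^{n−m−1}/(u_{x₁} v_{x_{n−m}})`, its uniform convergence
to `1`, and total-variation convergence `‖λ_{n,m} − ν_{n,m}‖_TV → 0`. -/
theorem eventual_gaussian_stmt10 (s : ℕ) (A : Matrix (Fin s) (Fin s) ℝ)
    (h01 : ∀ i j, A i j = 0 ∨ A i j = 1)
    (hirr : ∀ i j, ∃ m : ℕ, 0 < (A ^ m) i j)
    (haper : ∃ m₀ : ℕ, ∀ m : ℕ, m₀ ≤ m → ∀ i j, 0 < (A ^ m) i j)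
    (Λ : ℝ) (hΛ : 0 < Λ) (u v : Fin s → ℝ)
    (hu : ∀ i, 0 < u i) (hv : ∀ i, 0 < v i)
    (hleft : ∀ j, ∑ i, u i * A i j = Λ * u j)
    (hright : ∀ i, ∑ j, A i j * v j = Λ * v i)
    (hnorm : ∑ i, u i * v i = 1)
    (δ : ℝ) (hδ0 : 0 < δ) (hδ1 : δ < 1 / 4)
    (m : ℕ → ℕ) (hm : ∀ n, m n = Nat.floor ((n : ℝ) ^ δ)) :
    -- eventual absolute continuity
    (∃ N : ℕ, ∀ n : ℕ, N ≤ n → ∀ w : Fin (n - m n) → Fin s,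
      parryCyl A Λ u v w = 0 → cyclicMarginal A n w = 0) ∧
    -- Radon–Nikodym derivative formula on admissible words
    (∃ N : ℕ, ∀ n : ℕ, N ≤ n → ∀ w : Fin (n - m n) → Fin s, IsWord A w →
      ∀ h : 0 < n - m n,
        cyclicMarginal A n w =
          ((A ^ (m n + 1)) (w ⟨n - m n - 1, Nat.sub_lt h one_pos⟩) (w ⟨0, h⟩)
              / (A ^ n).trace)
            * (Λ ^ (n - m n - 1)
              / (u (w ⟨0, h⟩) * v (w ⟨n - m n - 1, Nat.sub_lt h one_pos⟩)))
            * parryCyl A Λ u v w) ∧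
    -- uniform convergence of the Radon–Nikodym derivative to 1
    (∀ ε : ℝ, 0 < ε → ∃ N : ℕ, ∀ n : ℕ, N ≤ n → ∀ w : Fin (n - m n) → Fin s,
      IsWord A w →
        |cyclicMarginal A n w / parryCyl A Λ u v w - 1| ≤ ε) ∧
    -- total variation convergence
    Tendsto (fun n : ℕ =>
        (1 / 2) * ∑ w : Fin (n - m n) → Fin s,
          |cyclicMarginal A n w - parryCyl A Λ u v w|) atTop (𝓝 0) := by
    -- Since `δ < 1`, the cut-off `m n` is eventually smaller than `n`.
  have hlt : ∀ n : ℕ, 2 ≤ n → m n < n := by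
    intro n hn
    have h1 : (1 : ℝ) < n := by exact_mod_cast hn
    rw [hm, Nat.floor_lt (by positivity)]
    calc (n : ℝ) ^ δ < (n : ℝ) ^ (1 : ℝ) := Real.rpow_lt_rpow_of_exponent_lt h1 (by linarith)
      _ = n := Real.rpow_one _
  have hmtop : Tendsto m atTop atTop := by
    rw [funext hm]
    exact tendsto_nat_floor_atTop.comp ((tendsto_rpow_atTop hδ0).comp tendsto_natCast_atTop_atTop)
  set B : Matrix (Fin s) (Fin s) ℝ := Λ⁻¹ • A with hBdef
  have hBpow : ∀ r x y, (B ^ r) x y = (A ^ r) x y / Λ ^ r := by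
    intro r x y
    rw [hBdef, smul_pow, Matrix.smul_apply, smul_eq_mul, inv_pow]
    ring
  have hB0 : ∀ i j, 0 ≤ B i j := by
    intro i j
    rw [hBdef, Matrix.smul_apply, smul_eq_mul]
    rcases h01 i j with h | h <;> rw [h] <;> simp [hΛ.le]
  have hBl : u ᵥ* B = u := by
    ext j
    have : (u ᵥ* A) j = Λ * u j := hleft j
    rw [hBdef, vecMul_smul, Pi.smul_apply, this, smul_eq_mul, inv_mul_cancel_left₀ hΛ.ne']
  have hBr : B *ᵥ v = v := by
    ext i
    have : (A *ᵥ v) i = Λ * v i := hright i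
    rw [hBdef, smul_mulVec, Pi.smul_apply, this, smul_eq_mul, inv_mul_cancel_left₀ hΛ.ne']
  obtain ⟨k, hk⟩ := haper
  have hBk : ∀ i j, 0 < (B ^ k) i j := fun i j => by
    rw [hBpow]
    exact div_pos (hk k le_rfl i j) (pow_pos hΛ _)
  have hPF : ∀ x y, Tendsto (fun r : ℕ => (A ^ r) x y / Λ ^ r) atTop (𝓝 (v x * u y)) := by
    intro x y
    simpa only [hBpow] using tendsto_pow_entry B hB0 hBk hu hnorm hBl hBr x y
  have htr : Tendsto (fun n : ℕ => (A ^ n).trace / Λ ^ n) atTop (𝓝 1) := by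
    have h1 : Tendsto (fun n : ℕ => ∑ x, (A ^ n) x x / Λ ^ n) atTop (𝓝 (∑ x, v x * u x)) :=
      tendsto_finsetSum _ fun x _ => hPF x x
    have h2 : ∑ x, v x * u x = 1 := by rw [← hnorm]; exact Finset.sum_congr rfl fun i _ => mul_comm _ _
    rw [h2] at h1
    refine h1.congr fun n => ?_
    rw [Matrix.trace, Finset.sum_div]
    rfl
  -- The density as a function of the last letter `x` and the first letter `y` of the word.
  have hD : ∀ x y, Tendsto (fun n : ℕ => ((A ^ (m n + 1)) x y / Λ ^ (m n + 1)) /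
      ((A ^ n).trace / Λ ^ n) / (u y * v x)) atTop (𝓝 1) := by
    intro x y
    have h1 := (((hPF x y).comp ((tendsto_add_atTop_nat 1).comp hmtop)).div htr
      one_ne_zero).div_const (u y * v x)
    have h2 : v x * u y / 1 / (u y * v x) = 1 := by
      have := (hu y).ne'
      have := (hv x).ne'
      field_simp
    rw [h2] at h1
    exact h1
  have hratio : ∀ n : ℕ, 2 ≤ n → ∀ w : Fin (n - m n) → Fin s, IsWord A w → ∀ h : 0 < n - m n,
      cyclicMarginal A n w / parryCyl A Λ u v w =
        ((A ^ (m n + 1)) (w ⟨n - m n - 1, Nat.sub_lt h one_pos⟩) (w ⟨0, h⟩) / Λ ^ (m n + 1)) /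
          ((A ^ n).trace / Λ ^ n) /
          (u (w ⟨0, h⟩) * v (w ⟨n - m n - 1, Nat.sub_lt h one_pos⟩)) := by
    intro n hn w hw h
    have hmn := hlt n hn
    rw [cyclicMarginal_eq A h01 hΛ hu hv (k := m n) (by omega) h w hw,
      mul_div_cancel_right₀ _ (parryCyl_pos hΛ hu hv h hw).ne']
    have e : Λ ^ n = Λ ^ (m n + 1) * Λ ^ (n - m n - 1) := by
      rw [← pow_add]
      congr 1
      omega
    rw [e]
    have h1 := (pow_pos hΛ (m n + 1)).ne'
    have h2 := (pow_pos hΛ (n - m n - 1)).ne'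
    have h3 := (hu (w ⟨0, h⟩)).ne'
    have h4 := (hv (w ⟨n - m n - 1, Nat.sub_lt h one_pos⟩)).ne'
    field_simp
  have hunif : ∀ ε : ℝ, 0 < ε → ∃ N : ℕ, ∀ n : ℕ, N ≤ n → ∀ w : Fin (n - m n) → Fin s,
      IsWord A w → |cyclicMarginal A n w / parryCyl A Λ u v w - 1| ≤ ε := by
    intro ε hε
    have hev : ∀ᶠ n : ℕ in atTop, ∀ p : Fin s × Fin s,
        |((A ^ (m n + 1)) p.1 p.2 / Λ ^ (m n + 1)) /
          ((A ^ n).trace / Λ ^ n) / (u p.2 * v p.1) - 1| ≤ ε := by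
      rw [eventually_all]
      intro p
      filter_upwards [(hD p.1 p.2).eventually (Metric.closedBall_mem_nhds 1 hε)] with n hn
      simpa [Real.dist_eq] using hn
    obtain ⟨N, hN⟩ := eventually_atTop.1 hev
    refine ⟨max N 2, fun n hn w hw => ?_⟩
    have hn2 : 2 ≤ n := (le_max_right _ _).trans hn
    have h : 0 < n - m n := Nat.sub_pos_of_lt (hlt n hn2)
    rw [hratio n hn2 w hw h]
    exact hN n ((le_max_left _ _).trans hn) (_, _)
  have hac : ∀ n : ℕ, 2 ≤ n → ∀ w : Fin (n - m n) → Fin s,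
      parryCyl A Λ u v w = 0 → cyclicMarginal A n w = 0 := by
    intro n hn w hw0
    have h : 0 < n - m n := Nat.sub_pos_of_lt (hlt n hn)
    have hw : ¬ IsWord A w := fun hw => (parryCyl_pos hΛ hu hv h hw).ne' hw0
    unfold cyclicMarginal
    rw [cyclicExtCount_of_not_isWord A (Nat.sub_le _ _) w hw]
    simp
  refine ⟨⟨2, hac⟩, ⟨2, fun n hn w hw h => ?_⟩, hunif, ?_⟩
  · have hmn := hlt n hn
    exact cyclicMarginal_eq A h01 hΛ hu hv (by omega) h w hw
  · rw [Metric.tendsto_atTop]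
    intro ε hε
    obtain ⟨N, hN⟩ := hunif ε hε
    refine ⟨max N 2, fun n hn => ?_⟩
    have hn2 : 2 ≤ n := (le_max_right _ _).trans hn
    have h : 0 < n - m n := Nat.sub_pos_of_lt (hlt n hn2)
    have hb : ∑ w : Fin (n - m n) → Fin s, |cyclicMarginal A n w - parryCyl A Λ u v w| ≤ ε := by
      calc ∑ w : Fin (n - m n) → Fin s, |cyclicMarginal A n w - parryCyl A Λ u v w|
          ≤ ∑ w : Fin (n - m n) → Fin s, ε * parryCyl A Λ u v w := by
            refine Finset.sum_le_sum fun w _ => ?_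
            by_cases hw : IsWord A w
            · have hp := parryCyl_pos hΛ hu hv h hw
              have h1 := hN n ((le_max_left _ _).trans hn) w hw
              rw [div_sub_one hp.ne', abs_div, abs_of_pos hp, div_le_iff₀ hp] at h1
              exact h1
            · have h0 : parryCyl A Λ u v w = 0 := dif_neg fun hh => hw hh.2
              rw [hac n hn2 w h0, h0]
              simp
        _ = ε := by rw [← Finset.mul_sum, sum_parryCyl A h01 hΛ hright hnorm h, mul_one]
    have h0 : 0 ≤ ∑ w : Fin (n - m n) → Fin s, |cyclicMarginal A n w - parryCyl A Λ u v w| :=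
      Finset.sum_nonneg fun w _ => abs_nonneg _
    rw [Real.dist_eq, sub_zero, abs_of_nonneg (by positivity)]
    linarith
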